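/- Let P* be a symmetric positive definite solution of the derivative-feedback algebraic Riccati equation and K* = −R⁻¹ Bᵀ A⁻ᵀ P*. Let K₁ be a stabilizing derivative-feedback gain and let sequences (Pᵢ)ᵢ≥1, (Kᵢ)ᵢ≥1 be such that K₁ is the given initial gain, for each i the matrix Pᵢ is a symmetric positive definite solution of the policy-evaluation equation for Kᵢ, and Kᵢ₊₁ = −R⁻¹ Bᵀ A⁻ᵀ Pᵢ. Then Pᵢ converges to P* and Kᵢ converges to K* as i → ∞ (entrywise, equivalently in any matrix norm). -/

import Mathlib

open Matrix MeasureTheory Filter Topology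

/-- A real square matrix is Hurwitz if every complex eigenvalue has strictly
negative real part. -/
def IsHurwitz {n : ℕ} (M : Matrix (Fin n) (Fin n) ℝ) : Prop :=
  ∀ μ ∈ spectrum ℂ (M.map (Complex.ofReal)), μ.re < 0

/-- A derivative-feedback gain `K` is stabilizing if `I + B * K` is invertible
and `(I + B * K)⁻¹ * A` is Hurwitz. -/
def IsStabilizing {n m : ℕ} (A : Matrix (Fin n) (Fin n) ℝ) (B : Matrix (Fin n) (Fin m) ℝ)
    (K : Matrix (Fin m) (Fin n) ℝ) : Prop :=
  IsUnit (1 + B * K) ∧ IsHurwitz ((1 + B * K)⁻¹ * A)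

/-- The policy-evaluation (Lyapunov) equation for the gain `K`:
`P (A⁻¹(I + BK)) + (A⁻¹(I + BK))ᵀ P + Q + Kᵀ R K = 0`. -/
def PolicyEval {n m : ℕ} (A : Matrix (Fin n) (Fin n) ℝ) (B : Matrix (Fin n) (Fin m) ℝ)
    (Q : Matrix (Fin n) (Fin n) ℝ) (R : Matrix (Fin m) (Fin m) ℝ)
    (K : Matrix (Fin m) (Fin n) ℝ) (P : Matrix (Fin n) (Fin n) ℝ) : Prop :=
  P * (A⁻¹ * (1 + B * K)) + (A⁻¹ * (1 + B * K))ᵀ * P + Q + Kᵀ * R * K = 0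

/-- The policy-improvement update: `K⁺ = −R⁻¹ Bᵀ A⁻ᵀ P`. -/
noncomputable def ImprovedGain {n m : ℕ} (A : Matrix (Fin n) (Fin n) ℝ) (B : Matrix (Fin n) (Fin m) ℝ)
    (R : Matrix (Fin m) (Fin m) ℝ) (P : Matrix (Fin n) (Fin n) ℝ) :
    Matrix (Fin m) (Fin n) ℝ :=
  -(R⁻¹ * Bᵀ * (A⁻¹)ᵀ * P)

/-- The derivative-feedback algebraic Riccati equation:
`P A⁻¹ + A⁻ᵀ P − P A⁻¹ B R⁻¹ Bᵀ A⁻ᵀ P + Q = 0`. -/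
def SolvesARE {n m : ℕ} (A : Matrix (Fin n) (Fin n) ℝ) (B : Matrix (Fin n) (Fin m) ℝ)
    (Q : Matrix (Fin n) (Fin n) ℝ) (R : Matrix (Fin m) (Fin m) ℝ)
    (P : Matrix (Fin n) (Fin n) ℝ) : Prop :=
  P * A⁻¹ + (A⁻¹)ᵀ * P - P * A⁻¹ * B * R⁻¹ * Bᵀ * (A⁻¹)ᵀ * P + Q = 0

/-
In the Loewner order, policy iteration is monotone. For a fixed gain `K` the map
`P ↦ P M + Mᵀ P + Q + Kᵀ R K` with `M = A⁻¹ (I + B K)` is affine, and since `M` is Hurwitz, a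
smaller value at `P` than at `P'` forces `P' ≤ P`. Completing the square in `K` shows that for
fixed `P` this value is smallest at the improved gain of `P`, where it equals the left-hand side
of the Riccati equation. Hence every iterate dominates `P*`, the iterates decrease, and their
limit `L ≥ P*` again solves the Riccati equation. As the gain of `P*` is itself stabilizing,
comparing there gives `L ≤ P*`.

Two facts support this. The Lyapunov comparison is transferred to discrete time by the Cayley
transform `C = (1 + M) (1 - M)⁻¹`, whose powers tend to zero: if `X M + Mᵀ X ≤ 0`, then
`Cᵀ X C ≤ X`, so `X ≥ (Cᵏ)ᵀ X Cᵏ → 0`. Stability of a new gain follows from a detectability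
argument: an unstable mode would have to be invisible to the change of the gain, and would
therefore already be unstable for the old gain.
-/

section LoewnerOrder

open scoped MatrixOrder ComplexOrder

lemma isSymm_of_le {ι : Type*} {X Y : Matrix ι ι ℝ} (hX : X.IsSymm) (h : X ≤ Y) : Y.IsSymm := by
  simpa using hX.add (isHermitian_iff_isSymm.1 (Matrix.le_iff.1 h).isHermitian)

lemma isClosed_setOf_posSemidef {ι 𝕜 : Type*} [Finite ι] [RCLike 𝕜] :
    IsClosed {M : Matrix ι ι 𝕜 | M.PosSemidef} := by
  cases nonempty_fintype ι
  simp only [posSemidef_iff_dotProduct_mulVec, Set.ofPred_and, Set.ofPred_forall]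
  refine (isClosed_eq (by fun_prop) (by fun_prop)).inter (isClosed_iInter fun x => ?_)
  exact isClosed_le continuous_const (by fun_prop)

instance matrixOrderClosedTopology {ι 𝕜 : Type*} [Finite ι] [RCLike 𝕜] :
    OrderClosedTopology (Matrix ι ι 𝕜) where
  isClosed_le' :=
    isClosed_setOf_posSemidef.preimage (by fun_prop : Continuous fun p : _ × _ => p.2 - p.1)

section QuadraticForms

variable {ι κ : Type*} [Fintype ι]

lemma transpose_mul_mul_mono [Finite κ] {X Y : Matrix ι ι ℝ} (h : X ≤ Y) (C : Matrix ι κ ℝ) :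
    Cᵀ * X * C ≤ Cᵀ * Y * C := by
  cases nonempty_fintype κ
  rw [Matrix.le_iff] at h ⊢
  simpa [Matrix.mul_sub, Matrix.sub_mul] using h.conjTranspose_mul_mul_same C

lemma transpose_mul_mul_nonneg [Finite κ] {X : Matrix ι ι ℝ} (hX : 0 ≤ X) (C : Matrix ι κ ℝ) :
    0 ≤ Cᵀ * X * C := by
  simpa using transpose_mul_mul_mono hX C

lemma dotProduct_mulVec_mono {X Y : Matrix ι ι ℝ} (h : X ≤ Y) (x : ι → ℝ) :
    x ⬝ᵥ (X *ᵥ x) ≤ x ⬝ᵥ (Y *ᵥ x) := by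
  simpa [sub_mulVec, dotProduct_sub] using (Matrix.le_iff.1 h).dotProduct_mulVec_nonneg x

end QuadraticForms

lemma exists_tendsto_of_antitone_of_le {ι : Type*} [Finite ι] {P : ℕ → Matrix ι ι ℝ}
    {S : Matrix ι ι ℝ} (hS : S.IsSymm) (hP : Antitone P) (hSP : ∀ i, S ≤ P i) :
    ∃ L, Tendsto P atTop (𝓝 L) := by
  classical
  cases nonempty_fintype ι
  have hquad (x : ι → ℝ) : ∃ q, Tendsto (fun i => x ⬝ᵥ (P i *ᵥ x)) atTop (𝓝 q) :=
    ⟨_, tendsto_atTop_ciInf (fun _ _ hij => dotProduct_mulVec_mono (hP hij) x)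
      ⟨x ⬝ᵥ (S *ᵥ x), Set.forall_mem_range.2 fun i => dotProduct_mulVec_mono (hSP i) x⟩⟩
  choose q hq using hquad
  let e (a : ι) : ι → ℝ := Pi.single a 1
  -- Polarization: `2 Pₐᵦ = (eₐ + eᵦ)ᵀ P (eₐ + eᵦ) - eₐᵀ P eₐ - eᵦᵀ P eᵦ` for symmetric `P`.
  refine ⟨fun a b => (q (e a + e b) - q (e a) - q (e b)) / 2,
    tendsto_pi_nhds.2 fun a => tendsto_pi_nhds.2 fun b => ?_⟩
  refine ((((hq (e a + e b)).sub (hq (e a))).sub (hq (e b))).div_const 2).congr fun i => ?_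
  have hsymm : P i b a = P i a b := (isSymm_of_le hS (hSP i)).apply a b
  simp only [mulVec_add, mulVec_single, MulOpposite.op_one, one_smul, dotProduct_add,
    add_dotProduct, single_dotProduct, col_apply, one_mul, hsymm, e]
  ring

end LoewnerOrder

section Complexification

open scoped MatrixOrder ComplexOrder

lemma map_ofReal_transpose {ι κ : Type*} (M : Matrix ι κ ℝ) :
    Mᵀ.map Complex.ofRealHom = (M.map Complex.ofRealHom)ᴴ := by
  ext i j
  simp

lemma isUnit_map_ofReal {ι : Type*} [Fintype ι] [DecidableEq ι] {M : Matrix ι ι ℝ} :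
    IsUnit (M.map Complex.ofRealHom) ↔ IsUnit M := by
  rw [isUnit_iff_isUnit_det, isUnit_iff_isUnit_det, ← RingHom.mapMatrix_apply, ← RingHom.map_det,
    isUnit_map_iff]

lemma posSemidef_map_ofReal {ι : Type*} [Finite ι] {M : Matrix ι ι ℝ} (hM : M.PosSemidef) :
    (M.map Complex.ofRealHom).PosSemidef := by
  classical
  cases nonempty_fintype ι
  obtain ⟨S, rfl⟩ := CStarAlgebra.nonneg_iff_eq_star_mul_self.1 hM.nonneg
  convert posSemidef_conjTranspose_mul_self (S.map Complex.ofRealHom)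
  ext i j
  simp [Matrix.mul_apply]

lemma posDef_map_ofReal {ι : Type*} [Finite ι] {M : Matrix ι ι ℝ} (hM : M.PosDef) :
    (M.map Complex.ofRealHom).PosDef := by
  classical
  cases nonempty_fintype ι
  exact (posSemidef_map_ofReal hM.posSemidef).posDef_iff_isUnit.2 (isUnit_map_ofReal.2 hM.isUnit)

lemma mem_spectrum_iff_exists_mulVec_eq_smul {ι K : Type*} [Fintype ι] [DecidableEq ι] [Field K]
    {M : Matrix ι ι K} {μ : K} : μ ∈ spectrum K M ↔ ∃ z ≠ 0, M *ᵥ z = μ • z := by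
  rw [← spectrum_toLin', ← Module.End.hasEigenvalue_iff_mem_spectrum]
  constructor
  · intro h
    obtain ⟨z, hz⟩ := h.exists_hasEigenvector
    exact ⟨z, hz.2, hz.apply_eq_smul⟩
  · rintro ⟨z, hz0, hz⟩
    exact Module.End.hasEigenvalue_of_hasEigenvector ⟨Module.End.mem_eigenspace_iff.2 hz, hz0⟩

end Complexification

section PowersTendToZero

lemma tendsto_pow_nhds_zero_of_spectralRadius_lt_one {𝔸 : Type*} [NormedRing 𝔸]
    [NormedAlgebra ℂ 𝔸] [CompleteSpace 𝔸] {a : 𝔸} (ha : spectralRadius ℂ a < 1) :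
    Tendsto (fun k : ℕ => a ^ k) atTop (𝓝 0) := by
  obtain ⟨r, har, hr⟩ := ENNReal.lt_iff_exists_nnreal_btwn.1 ha
  have hbound : ∀ᶠ k : ℕ in atTop, ‖a ^ k‖ ≤ (r : ℝ) ^ k := by
    filter_upwards [(spectrum.gelfand_formula a).eventually_lt_const har,
      eventually_gt_atTop 0] with k hk hk0
    rw [one_div, ENNReal.rpow_inv_lt_iff (by positivity), ENNReal.rpow_natCast] at hk
    exact_mod_cast hk.le
  exact squeeze_zero_norm' hbound
    (tendsto_pow_atTop_nhds_zero_of_lt_one r.2 (by exact_mod_cast hr))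

open scoped Matrix.Norms.Operator in
lemma tendsto_pow_nhds_zero_of_spectrum_norm_lt_one {ι : Type*} [Fintype ι] [DecidableEq ι]
    {C : Matrix ι ι ℝ} (hC : ∀ μ ∈ spectrum ℂ (C.map Complex.ofRealHom), ‖μ‖ < 1) :
    Tendsto (fun k : ℕ => C ^ k) atTop (𝓝 0) := by
  have hradius : spectralRadius ℂ (C.map Complex.ofRealHom) < 1 := by
    cases isEmpty_or_nonempty ι
    · rw [spectralRadius, spectrum.of_subsingleton]
      simp
    · exact spectrum.spectralRadius_lt_of_forall_lt _ fun μ hμ => hC μ hμ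
  have hlim := tendsto_pow_nhds_zero_of_spectralRadius_lt_one hradius
  refine tendsto_pi_nhds.2 fun a => tendsto_pi_nhds.2 fun b => ?_
  have hab :=
    (Complex.continuous_re.tendsto _).comp (tendsto_pi_nhds.1 (tendsto_pi_nhds.1 hlim a) b)
  refine hab.congr fun k => ?_
  rw [Function.comp_apply, ← RingHom.mapMatrix_apply, ← map_pow]
  rfl

end PowersTendToZero

section Lyapunov

open scoped MatrixOrder ComplexOrder

lemma isHurwitz_iff_forall_mulVec_eq_smul {n : ℕ} {M : Matrix (Fin n) (Fin n) ℝ} : IsHurwitz M ↔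
    ∀ (μ : ℂ) (z : Fin n → ℂ), z ≠ 0 → M.map Complex.ofRealHom *ᵥ z = μ • z → μ.re < 0 := by
  change (∀ μ ∈ spectrum ℂ (M.map Complex.ofRealHom), μ.re < 0) ↔ _
  simp only [mem_spectrum_iff_exists_mulVec_eq_smul, forall_exists_index, and_imp]

/-- The Cayley transform `(1 + M) (1 - M)⁻¹`, which turns the continuous-time stability of `M` into
discrete-time stability. It is meaningful only where `1 - M` is invertible, for instance for
Hurwitz `M`. -/
noncomputable def cayley {n : ℕ} (M : Matrix (Fin n) (Fin n) ℝ) : Matrix (Fin n) (Fin n) ℝ :=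
  (1 + M) * (1 - M)⁻¹

lemma transpose_cayley_mul_mul_cayley_le {n : ℕ} {M : Matrix (Fin n) (Fin n) ℝ}
    (hM : IsUnit (1 - M)) {X : Matrix (Fin n) (Fin n) ℝ} (hX : X * M + Mᵀ * X ≤ 0) :
    (cayley M)ᵀ * X * cayley M ≤ X := by
  have hinv : (1 - M) * (1 - M)⁻¹ = 1 := mul_nonsing_inv _ ((isUnit_iff_isUnit_det _).1 hM)
  have hdefect : (1 + M)ᵀ * X * (1 + M) ≤ (1 - M)ᵀ * X * (1 - M) := by
    have hsplit : (1 + M)ᵀ * X * (1 + M) =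
        (1 - M)ᵀ * X * (1 - M) + ((X * M + Mᵀ * X) + (X * M + Mᵀ * X)) := by
      simp only [transpose_add, transpose_sub, transpose_one]
      noncomm_ring
    rw [hsplit]
    exact add_le_of_nonpos_right (add_nonpos hX hX)
  calc (cayley M)ᵀ * X * cayley M
      = (1 - M)⁻¹ᵀ * ((1 + M)ᵀ * X * (1 + M)) * (1 - M)⁻¹ := by
        simp only [cayley, transpose_mul, Matrix.mul_assoc]
    _ ≤ (1 - M)⁻¹ᵀ * ((1 - M)ᵀ * X * (1 - M)) * (1 - M)⁻¹ := transpose_mul_mul_mono hdefect _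
    _ = ((1 - M) * (1 - M)⁻¹)ᵀ * X * ((1 - M) * (1 - M)⁻¹) := by
        simp only [transpose_mul, Matrix.mul_assoc]
    _ = X := by rw [hinv, transpose_one, Matrix.one_mul, Matrix.mul_one]

lemma norm_lt_one_of_re_cayley_neg {ρ : ℂ} (hρ : ρ + 1 ≠ 0) (h : ((ρ - 1) / (ρ + 1)).re < 0) :
    ‖ρ‖ < 1 := by
  have hre : ((ρ - 1) / (ρ + 1)).re = (‖ρ‖ ^ 2 - 1) / ‖ρ + 1‖ ^ 2 := by
    rw [Complex.div_re, ← add_div, ← Complex.normSq_eq_norm_sq, ← Complex.normSq_eq_norm_sq,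
      Complex.normSq_apply ρ]
    congr 1
    simp only [Complex.sub_re, Complex.one_re, Complex.add_re, Complex.sub_im, Complex.one_im,
      sub_zero, Complex.add_im, add_zero]
    ring
  rw [hre, div_lt_iff₀ (by positivity), zero_mul, sub_neg] at h
  exact (sq_lt_one_iff₀ (norm_nonneg ρ)).1 h

namespace IsHurwitz

variable {n : ℕ} {M : Matrix (Fin n) (Fin n) ℝ}

lemma isUnit (hM : IsHurwitz M) : IsUnit M := by
  rw [← isUnit_map_ofReal, ← spectrum.zero_notMem_iff ℂ]
  exact fun h => lt_irrefl 0 (hM 0 h)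

lemma isUnit_one_sub (hM : IsHurwitz M) : IsUnit (1 - M) := by
  rw [← isUnit_map_ofReal, ← RingHom.mapMatrix_apply, map_sub, map_one, ← map_one (algebraMap ℂ _),
    ← spectrum.notMem_iff]
  exact fun h => (zero_lt_one.trans (hM 1 h)).false

lemma transpose (hM : IsHurwitz M) : IsHurwitz Mᵀ := by
  intro μ hμ
  rw [transpose_map, mem_spectrum_iff_isRoot_charpoly, charpoly_transpose,
    ← mem_spectrum_iff_isRoot_charpoly] at hμ
  exact hM μ hμ

lemma inv (hM : IsHurwitz M) : IsHurwitz M⁻¹ := by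
  have hunit : M * M⁻¹ = 1 := mul_nonsing_inv _ ((isUnit_iff_isUnit_det _).1 hM.isUnit)
  rw [isHurwitz_iff_forall_mulVec_eq_smul] at hM ⊢
  intro μ z hz hμz
  have hz_eq : z = μ • M.map Complex.ofRealHom *ᵥ z := by
    rw [← mulVec_smul, ← hμz, mulVec_mulVec, ← Matrix.map_mul, hunit,
      Matrix.map_one _ (map_zero _) (map_one _), one_mulVec]
  have hμ : μ ≠ 0 := by
    rintro rfl
    exact hz (by rwa [zero_smul] at hz_eq)
  have hre : μ⁻¹.re < 0 := hM μ⁻¹ z hz ((eq_inv_smul_iff₀ hμ).2 hz_eq.symm)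
  rw [Complex.inv_re] at hre
  exact neg_of_div_neg_left hre (Complex.normSq_nonneg μ)

lemma norm_lt_one_of_mem_spectrum_cayley (hM : IsHurwitz M) {ρ : ℂ}
    (hρ : ρ ∈ spectrum ℂ ((cayley M).map Complex.ofRealHom)) : ‖ρ‖ < 1 := by
  obtain ⟨z, hz, hρz⟩ := mem_spectrum_iff_exists_mulVec_eq_smul.1 hρ
  have hinv : (1 - M) * (1 - M)⁻¹ = 1 :=
    mul_nonsing_inv _ ((isUnit_iff_isUnit_det _).1 hM.isUnit_one_sub)
  set y := (1 - M)⁻¹.map Complex.ofRealHom *ᵥ z with hy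
  have hone : (1 : Matrix (Fin n) (Fin n) ℝ).map Complex.ofRealHom = 1 :=
    Matrix.map_one _ (map_zero _) (map_one _)
  have hzy : y - M.map Complex.ofRealHom *ᵥ y = z := by
    have h := congrArg (fun N => N.map Complex.ofRealHom *ᵥ z) hinv
    simpa only [Matrix.map_mul, ← mulVec_mulVec, ← hy, Matrix.map_sub _ (map_sub _), hone,
      sub_mulVec, one_mulVec] using h
  have hρy : y + M.map Complex.ofRealHom *ᵥ y = ρ • z := by
    simpa only [cayley, Matrix.map_mul, ← mulVec_mulVec, ← hy, Matrix.map_add _ (map_add _), hone,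
      add_mulVec, one_mulVec] using hρz
  have hy0 : y ≠ 0 := by
    intro hy0
    exact hz (by rw [← hzy, hy0, mulVec_zero, sub_zero])
  have hMy : (ρ + 1) • M.map Complex.ofRealHom *ᵥ y = (ρ - 1) • y := by
    rw [← hzy] at hρy
    linear_combination (norm := module) hρy
  have hρ1 : ρ + 1 ≠ 0 := by
    intro h
    rw [h, zero_smul, eq_comm, smul_eq_zero_iff_left hy0] at hMy
    exact two_ne_zero (α := ℂ) (by linear_combination h - hMy)
  refine norm_lt_one_of_re_cayley_neg hρ1 (isHurwitz_iff_forall_mulVec_eq_smul.1 hM _ y hy0 ?_)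
  rw [div_eq_inv_mul, mul_smul, ← hMy, inv_smul_smul₀ hρ1]

lemma tendsto_cayley_pow (hM : IsHurwitz M) :
    Tendsto (fun k : ℕ => cayley M ^ k) atTop (𝓝 0) :=
  tendsto_pow_nhds_zero_of_spectrum_norm_lt_one fun _ => hM.norm_lt_one_of_mem_spectrum_cayley

lemma nonneg_of_lyapunov_nonpos (hM : IsHurwitz M) {X : Matrix (Fin n) (Fin n) ℝ}
    (hX : X * M + Mᵀ * X ≤ 0) : 0 ≤ X := by
  have hle (k : ℕ) : (cayley M ^ k)ᵀ * X * cayley M ^ k ≤ X := by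
    induction k with
    | zero => simp
    | succ k ih =>
      calc (cayley M ^ (k + 1))ᵀ * X * cayley M ^ (k + 1)
          = (cayley M ^ k)ᵀ * ((cayley M)ᵀ * X * cayley M) * cayley M ^ k := by
            simp only [pow_succ', transpose_mul, Matrix.mul_assoc]
        _ ≤ (cayley M ^ k)ᵀ * X * cayley M ^ k :=
            transpose_mul_mul_mono (transpose_cayley_mul_mul_cayley_le hM.isUnit_one_sub hX) _
        _ ≤ X := ih
  have hcont : Continuous fun C : Matrix (Fin n) (Fin n) ℝ => Cᵀ * X * C := by fun_prop
  have hlim := (hcont.tendsto 0).comp hM.tendsto_cayley_pow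
  rw [Matrix.mul_zero] at hlim
  exact le_of_tendsto' hlim hle

end IsHurwitz

lemma dotProduct_lyapunov_of_mulVec_eq_smul {ι : Type*} [Fintype ι] {X M : Matrix ι ι ℂ} {μ : ℂ}
    {z : ι → ℂ} (hz : M *ᵥ z = μ • z) :
    star z ⬝ᵥ ((X * M + Mᴴ * X) *ᵥ z) = (2 * μ.re : ℝ) * (star z ⬝ᵥ (X *ᵥ z)) := by
  have hstar : star z ᵥ* Mᴴ = star μ • star z := by rw [← star_mulVec, hz, star_smul]
  rw [add_mulVec, dotProduct_add, ← mulVec_mulVec, hz, ← mulVec_mulVec, dotProduct_mulVec _ Mᴴ,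
    hstar, mulVec_smul, dotProduct_smul, smul_dotProduct, ← add_smul, smul_eq_mul]
  congr 1
  exact Complex.add_conj μ

-- An eigenvector of `M` for an eigenvalue with nonnegative real part is annihilated by `D`, so it
-- is also an eigenvector of `M + G * D`.
lemma IsHurwitz.of_add_mul_of_lyapunov_le {n : ℕ} {κ : Type*} [Fintype κ]
    {M X : Matrix (Fin n) (Fin n) ℝ} {R : Matrix κ κ ℝ} {D : Matrix κ (Fin n) ℝ}
    {G : Matrix (Fin n) κ ℝ} (hMG : IsHurwitz (M + G * D)) (hX : 0 ≤ X) (hR : R.PosDef)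
    (hlyap : X * M + Mᵀ * X ≤ -(Dᵀ * R * D)) : IsHurwitz M := by
  rw [isHurwitz_iff_forall_mulVec_eq_smul] at hMG ⊢
  intro μ z hz hμz
  by_contra! hμ
  set w := D.map Complex.ofRealHom *ᵥ z with hw
  have hw_nonpos : star w ⬝ᵥ (R.map Complex.ofRealHom *ᵥ w) ≤ 0 := by
    have hdefect := (posSemidef_map_ofReal (Matrix.le_iff.1 hlyap)).dotProduct_mulVec_nonneg z
    have hw_eq : star z ⬝ᵥ ((Dᵀ * R * D).map Complex.ofRealHom *ᵥ z) =
        star w ⬝ᵥ (R.map Complex.ofRealHom *ᵥ w) := by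
      rw [Matrix.map_mul, Matrix.map_mul, map_ofReal_transpose, ← mulVec_mulVec, ← mulVec_mulVec,
        dotProduct_mulVec, ← star_mulVec]
    rw [Matrix.map_sub _ (map_sub _), Matrix.map_neg _ (map_neg _), sub_mulVec, dotProduct_sub,
      neg_mulVec, dotProduct_neg, hw_eq, Matrix.map_add _ (map_add _), Matrix.map_mul,
      Matrix.map_mul, map_ofReal_transpose, dotProduct_lyapunov_of_mulVec_eq_smul hμz] at hdefect
    have hXz := (posSemidef_map_ofReal (nonneg_iff_posSemidef.1 hX)).dotProduct_mulVec_nonneg z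
    have hμXz := mul_nonneg (a := ((2 * μ.re : ℝ) : ℂ)) (by exact_mod_cast (by positivity)) hXz
    exact (le_neg_of_le_neg (sub_nonneg.1 hdefect)).trans (neg_nonpos.2 hμXz)
  have hw_zero : w = 0 := by
    by_contra hw0
    exact hw_nonpos.not_gt ((posDef_map_ofReal hR).dotProduct_mulVec_pos hw0)
  refine hμ.not_gt (hMG μ z hz ?_)
  rw [Matrix.map_add _ (map_add _), Matrix.map_mul, add_mulVec, ← mulVec_mulVec, ← hw, hw_zero,
    mulVec_zero, add_zero, hμz]

-- The dual of `IsHurwitz.of_add_mul_of_lyapunov_le`, with `Mᵀ` and `X⁻¹` in place of `M` and `X`.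
lemma IsHurwitz.of_add_inv_mul_of_lyapunov_le {n : ℕ} {κ : Type*} [Fintype κ]
    {M X : Matrix (Fin n) (Fin n) ℝ} {R : Matrix κ κ ℝ} {D F : Matrix κ (Fin n) ℝ}
    (hMF : IsHurwitz (M + X⁻¹ * Dᵀ * F)) (hX : X.PosDef) (hR : R.PosDef)
    (hlyap : X * M + Mᵀ * X ≤ -(Dᵀ * R * D)) : IsHurwitz M := by
  have hdet : IsUnit X.det := (isUnit_iff_isUnit_det _).1 hX.isUnit
  have hXinv : X⁻¹ᵀ = X⁻¹ := isHermitian_iff_isSymm.1 hX.inv.isHermitian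
  have hdual : X⁻¹ * Mᵀ + Mᵀᵀ * X⁻¹ ≤ -((D * X⁻¹)ᵀ * R * (D * X⁻¹)) :=
    calc X⁻¹ * Mᵀ + Mᵀᵀ * X⁻¹
        = X⁻¹ᵀ * (X * M + Mᵀ * X) * X⁻¹ := by
          rw [hXinv, Matrix.mul_add, Matrix.add_mul, nonsing_inv_mul_cancel_left _ _ hdet,
            ← Matrix.mul_assoc X⁻¹ Mᵀ X, mul_nonsing_inv_cancel_right _ _ hdet,
            transpose_transpose, add_comm]
      _ ≤ X⁻¹ᵀ * -(Dᵀ * R * D) * X⁻¹ := transpose_mul_mul_mono hlyap _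
      _ = -((D * X⁻¹)ᵀ * R * (D * X⁻¹)) := by
          simp only [transpose_mul, Matrix.mul_neg, Matrix.neg_mul, Matrix.mul_assoc]
  have hMF' : IsHurwitz (Mᵀ + Fᵀ * (D * X⁻¹)) := by
    simpa only [transpose_add, transpose_mul, transpose_transpose, hXinv] using hMF.transpose
  exact (hMF'.of_add_mul_of_lyapunov_le hX.inv.posSemidef.nonneg hR hdual).transpose

end Lyapunov

section PolicyIteration

open scoped MatrixOrder

variable {n m : ℕ} {A Q P P' S : Matrix (Fin n) (Fin n) ℝ} {B : Matrix (Fin n) (Fin m) ℝ}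
  {R : Matrix (Fin m) (Fin m) ℝ} {K : Matrix (Fin m) (Fin n) ℝ}

/-- The inverse `A⁻¹ (I + B K)` of the closed-loop matrix `(I + B K)⁻¹ A`. It is Hurwitz exactly
when the closed-loop matrix is, and it is the coefficient of the policy-evaluation equation. -/
noncomputable def invClosedLoop (A : Matrix (Fin n) (Fin n) ℝ) (B : Matrix (Fin n) (Fin m) ℝ)
    (K : Matrix (Fin m) (Fin n) ℝ) : Matrix (Fin n) (Fin n) ℝ :=
  A⁻¹ * (1 + B * K)

lemma isStabilizing_iff_isHurwitz_invClosedLoop :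
    IsStabilizing A B K ↔ IsHurwitz (invClosedLoop A B K) := by
  constructor
  · rintro ⟨hK, hM⟩
    have hinv : (1 + B * K)⁻¹⁻¹ = 1 + B * K :=
      nonsing_inv_nonsing_inv _ ((isUnit_iff_isUnit_det _).1 hK)
    simpa only [invClosedLoop, Matrix.mul_inv_rev, hinv] using hM.inv
  · intro hM
    have hunits := (isUnit_iff_isUnit_det _).1 hM.isUnit
    rw [invClosedLoop, det_mul, IsUnit.mul_iff, isUnit_nonsing_inv_det_iff] at hunits
    refine ⟨(isUnit_iff_isUnit_det _).2 hunits.2, ?_⟩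
    simpa only [invClosedLoop, Matrix.mul_inv_rev, nonsing_inv_nonsing_inv _ hunits.1] using hM.inv

lemma invClosedLoop_eq_add (A : Matrix (Fin n) (Fin n) ℝ) (B : Matrix (Fin n) (Fin m) ℝ)
    (K K' : Matrix (Fin m) (Fin n) ℝ) :
    invClosedLoop A B K = invClosedLoop A B K' + A⁻¹ * B * (K - K') := by
  simp only [invClosedLoop, Matrix.mul_add, Matrix.mul_sub, Matrix.mul_assoc]
  abel

/-- The left-hand side of the policy-evaluation equation. Its values at different gains and cost
matrices are compared in the Loewner order. -/
noncomputable def policyResidual (A : Matrix (Fin n) (Fin n) ℝ) (B : Matrix (Fin n) (Fin m) ℝ)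
    (Q : Matrix (Fin n) (Fin n) ℝ) (R : Matrix (Fin m) (Fin m) ℝ)
    (K : Matrix (Fin m) (Fin n) ℝ) (P : Matrix (Fin n) (Fin n) ℝ) : Matrix (Fin n) (Fin n) ℝ :=
  P * invClosedLoop A B K + (invClosedLoop A B K)ᵀ * P + Q + Kᵀ * R * K

lemma policyEval_iff : PolicyEval A B Q R K P ↔ policyResidual A B Q R K P = 0 :=
  Iff.rfl

/-- The left-hand side of the derivative-feedback algebraic Riccati equation. It is the minimum of
`policyResidual A B Q R K P` over `K`. -/
noncomputable def riccatiResidual (A : Matrix (Fin n) (Fin n) ℝ) (B : Matrix (Fin n) (Fin m) ℝ)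
    (Q : Matrix (Fin n) (Fin n) ℝ) (R : Matrix (Fin m) (Fin m) ℝ)
    (P : Matrix (Fin n) (Fin n) ℝ) : Matrix (Fin n) (Fin n) ℝ :=
  P * A⁻¹ + (A⁻¹)ᵀ * P - P * A⁻¹ * B * R⁻¹ * Bᵀ * (A⁻¹)ᵀ * P + Q

lemma solvesARE_iff : SolvesARE A B Q R P ↔ riccatiResidual A B Q R P = 0 :=
  Iff.rfl

lemma continuous_improvedGain : Continuous (ImprovedGain A B R) := by
  unfold ImprovedGain
  fun_prop

lemma isClosed_setOf_policyEval :
    IsClosed {p : Matrix (Fin m) (Fin n) ℝ × Matrix (Fin n) (Fin n) ℝ |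
      PolicyEval A B Q R p.1 p.2} := by
  unfold PolicyEval
  exact isClosed_eq (by fun_prop) continuous_const

lemma mul_improvedGain (hR : IsUnit R) (P : Matrix (Fin n) (Fin n) ℝ) :
    R * ImprovedGain A B R P = -((A⁻¹ * B)ᵀ * P) := by
  rw [ImprovedGain, Matrix.mul_neg, Matrix.mul_assoc, Matrix.mul_assoc,
    mul_nonsing_inv_cancel_left _ _ ((isUnit_iff_isUnit_det _).1 hR), transpose_mul,
    Matrix.mul_assoc]

lemma transpose_improvedGain_mul (hR : R.PosDef) (hP : P.IsSymm) :
    (ImprovedGain A B R P)ᵀ * R = -(P * (A⁻¹ * B)) := by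
  have hRsymm : R.IsSymm := isHermitian_iff_isSymm.1 hR.isHermitian
  have h := congrArg transpose (mul_improvedGain (A := A) (B := B) hR.isUnit P)
  rwa [transpose_mul, hRsymm.eq, transpose_neg, transpose_mul, transpose_transpose, hP.eq] at h

lemma policyResidual_eq_riccatiResidual_add (hR : R.PosDef) (hP : P.IsSymm) :
    policyResidual A B Q R K P = riccatiResidual A B Q R P +
      (K - ImprovedGain A B R P)ᵀ * R * (K - ImprovedGain A B R P) := by
  set L := ImprovedGain A B R P with hL
  have hleft : (A⁻¹ * B)ᵀ * P = -(R * L) := by rw [mul_improvedGain hR.isUnit, neg_neg]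
  have hright : P * (A⁻¹ * B) = -(Lᵀ * R) := by rw [transpose_improvedGain_mul hR hP, neg_neg]
  have hquad : P * A⁻¹ * B * R⁻¹ * Bᵀ * (A⁻¹)ᵀ * P = Lᵀ * R * L := by
    rw [transpose_improvedGain_mul hR hP, hL, ImprovedGain]
    simp only [Matrix.mul_assoc, Matrix.neg_mul, Matrix.mul_neg, neg_neg]
  calc policyResidual A B Q R K P
      = P * A⁻¹ + (A⁻¹)ᵀ * P + P * (A⁻¹ * B) * K + Kᵀ * ((A⁻¹ * B)ᵀ * P) + Q + Kᵀ * R * K := by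
        simp only [policyResidual, invClosedLoop, transpose_mul, transpose_add, Matrix.mul_add,
          Matrix.add_mul, Matrix.mul_one, Matrix.mul_assoc]
        abel
    _ = P * A⁻¹ + (A⁻¹)ᵀ * P - Lᵀ * R * L + Q + (K - L)ᵀ * R * (K - L) := by
        simp only [hleft, hright, transpose_sub, Matrix.mul_sub, Matrix.sub_mul, Matrix.mul_neg,
          Matrix.neg_mul, Matrix.mul_assoc]
        abel
    _ = riccatiResidual A B Q R P + (K - L)ᵀ * R * (K - L) := by rw [← hquad, riccatiResidual]

lemma policyResidual_improvedGain (hR : R.PosDef) (hP : P.IsSymm) :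
    policyResidual A B Q R (ImprovedGain A B R P) P = riccatiResidual A B Q R P := by
  simp [policyResidual_eq_riccatiResidual_add hR hP]

lemma policyEval_improvedGain_iff (hR : R.PosDef) (hP : P.IsSymm) :
    PolicyEval A B Q R (ImprovedGain A B R P) P ↔ SolvesARE A B Q R P := by
  rw [policyEval_iff, solvesARE_iff, policyResidual_improvedGain hR hP]

lemma riccatiResidual_le_policyResidual (hR : R.PosDef) (hP : P.IsSymm)
    (K : Matrix (Fin m) (Fin n) ℝ) :
    riccatiResidual A B Q R P ≤ policyResidual A B Q R K P := by
  rw [policyResidual_eq_riccatiResidual_add hR hP]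
  exact le_add_of_nonneg_right (transpose_mul_mul_nonneg hR.posSemidef.nonneg _)

lemma policyResidual_sub (P P' : Matrix (Fin n) (Fin n) ℝ) :
    policyResidual A B Q R K P - policyResidual A B Q R K P' =
      (P - P') * invClosedLoop A B K + (invClosedLoop A B K)ᵀ * (P - P') := by
  simp only [policyResidual]
  noncomm_ring

lemma le_of_policyResidual_le (hK : IsHurwitz (invClosedLoop A B K))
    (h : policyResidual A B Q R K P ≤ policyResidual A B Q R K P') : P' ≤ P := by
  rw [← sub_nonneg]
  apply hK.nonneg_of_lyapunov_nonpos
  rwa [← policyResidual_sub, sub_nonpos]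

namespace SolvesARE

lemma policyResidual_nonneg (hS : SolvesARE A B Q R S) (hSsymm : S.IsSymm) (hR : R.PosDef)
    (K : Matrix (Fin m) (Fin n) ℝ) : 0 ≤ policyResidual A B Q R K S := by
  rw [← solvesARE_iff.1 hS]
  exact riccatiResidual_le_policyResidual hR hSsymm K

lemma le_of_policyEval (hS : SolvesARE A B Q R S) (hSsymm : S.IsSymm) (hR : R.PosDef)
    (hK : IsHurwitz (invClosedLoop A B K)) (hP : PolicyEval A B Q R K P) : S ≤ P := by
  apply le_of_policyResidual_le hK
  rw [policyEval_iff.1 hP]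
  exact hS.policyResidual_nonneg hSsymm hR K

lemma isHurwitz_invClosedLoop_improvedGain (hS : SolvesARE A B Q R S) (hSsymm : S.IsSymm)
    (hR : R.PosDef) (hK : IsHurwitz (invClosedLoop A B K)) (hP : PolicyEval A B Q R K P) :
    IsHurwitz (invClosedLoop A B (ImprovedGain A B R P)) := by
  have hle : S ≤ P := hS.le_of_policyEval hSsymm hR hK hP
  have hPsymm : P.IsSymm := isSymm_of_le hSsymm hle
  rw [invClosedLoop_eq_add A B K (ImprovedGain A B R P)] at hK
  refine hK.of_add_mul_of_lyapunov_le (sub_nonneg.2 hle) hR ?_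
  have hriccati : riccatiResidual A B Q R P =
      -((K - ImprovedGain A B R P)ᵀ * R * (K - ImprovedGain A B R P)) := by
    rw [eq_neg_iff_add_eq_zero, ← policyResidual_eq_riccatiResidual_add hR hPsymm,
      policyEval_iff.1 hP]
  rw [← policyResidual_sub, policyResidual_improvedGain hR hPsymm, hriccati]
  exact sub_le_self _ (hS.policyResidual_nonneg hSsymm hR _)

lemma isHurwitz_invClosedLoop (hS : SolvesARE A B Q R S) (hSpos : S.PosDef)
    (hQ : Q.PosSemidef) (hR : R.PosDef) (hK : IsHurwitz (invClosedLoop A B K)) :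
    IsHurwitz (invClosedLoop A B (ImprovedGain A B R S)) := by
  have hSsymm : S.IsSymm := isHermitian_iff_isSymm.1 hSpos.isHermitian
  have hdet : IsUnit S.det := (isUnit_iff_isUnit_det _).1 hSpos.isUnit
  let L := ImprovedGain A B R S
  have hfeedback : S⁻¹ * Lᵀ * (-(R * (K - L))) = A⁻¹ * B * (K - L) := by
    rw [Matrix.mul_neg, Matrix.mul_assoc, ← Matrix.mul_assoc Lᵀ,
      transpose_improvedGain_mul hR hSsymm, Matrix.neg_mul, Matrix.mul_neg, neg_neg,
      Matrix.mul_assoc S, nonsing_inv_mul_cancel_left _ _ hdet]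
  have hlyap : S * invClosedLoop A B L + (invClosedLoop A B L)ᵀ * S ≤ -(Lᵀ * R * L) := by
    have hresidual := policyEval_iff.1 ((policyEval_improvedGain_iff hR hSsymm).2 hS)
    rw [policyResidual, add_right_comm] at hresidual
    rw [le_neg_iff_add_nonpos_right, eq_neg_of_add_eq_zero_left hresidual]
    exact neg_nonpos.2 hQ.nonneg
  rw [invClosedLoop_eq_add A B K L, ← hfeedback] at hK
  exact hK.of_add_inv_mul_of_lyapunov_le hSpos hR hlyap

end SolvesARE

/-- `P` and `K` are sequences of cost matrices and gains produced by policy iteration, indexed from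
`0`. No sign is imposed on the cost matrices. -/
def IsPolicyIteration (A : Matrix (Fin n) (Fin n) ℝ) (B : Matrix (Fin n) (Fin m) ℝ)
    (Q : Matrix (Fin n) (Fin n) ℝ) (R : Matrix (Fin m) (Fin m) ℝ)
    (P : ℕ → Matrix (Fin n) (Fin n) ℝ) (K : ℕ → Matrix (Fin m) (Fin n) ℝ) : Prop :=
  ∀ i, PolicyEval A B Q R (K i) (P i) ∧ K (i + 1) = ImprovedGain A B R (P i)

namespace IsPolicyIteration

variable {P : ℕ → Matrix (Fin n) (Fin n) ℝ} {K : ℕ → Matrix (Fin m) (Fin n) ℝ}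

lemma isHurwitz_invClosedLoop (h : IsPolicyIteration A B Q R P K) (hR : R.PosDef)
    (hSsymm : S.IsSymm) (hS : SolvesARE A B Q R S) (hK : IsHurwitz (invClosedLoop A B (K 0)))
    (i : ℕ) : IsHurwitz (invClosedLoop A B (K i)) := by
  induction i with
  | zero => exact hK
  | succ i ih =>
    rw [(h i).2]
    exact hS.isHurwitz_invClosedLoop_improvedGain hSsymm hR ih (h i).1

lemma le (h : IsPolicyIteration A B Q R P K) (hR : R.PosDef) (hSsymm : S.IsSymm)
    (hS : SolvesARE A B Q R S) (hK : IsHurwitz (invClosedLoop A B (K 0))) (i : ℕ) : S ≤ P i :=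
  hS.le_of_policyEval hSsymm hR (h.isHurwitz_invClosedLoop hR hSsymm hS hK i) (h i).1

lemma antitone (h : IsPolicyIteration A B Q R P K) (hR : R.PosDef) (hSsymm : S.IsSymm)
    (hS : SolvesARE A B Q R S) (hK : IsHurwitz (invClosedLoop A B (K 0))) : Antitone P := by
  refine antitone_nat_of_succ_le fun i => ?_
  have hsymm : (P i).IsSymm := isSymm_of_le hSsymm (h.le hR hSsymm hS hK i)
  apply le_of_policyResidual_le (h.isHurwitz_invClosedLoop hR hSsymm hS hK (i + 1))
  calc policyResidual A B Q R (K (i + 1)) (P i)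
      = riccatiResidual A B Q R (P i) := by rw [(h i).2, policyResidual_improvedGain hR hsymm]
    _ ≤ policyResidual A B Q R (K i) (P i) := riccatiResidual_le_policyResidual hR hsymm _
    _ = policyResidual A B Q R (K (i + 1)) (P (i + 1)) := by
        rw [policyEval_iff.1 (h i).1, policyEval_iff.1 (h (i + 1)).1]

lemma policyEval_of_tendsto (h : IsPolicyIteration A B Q R P K)
    {Plim : Matrix (Fin n) (Fin n) ℝ} {Klim : Matrix (Fin m) (Fin n) ℝ}
    (hP : Tendsto P atTop (𝓝 Plim)) (hK : Tendsto K atTop (𝓝 Klim)) :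
    PolicyEval A B Q R Klim Plim :=
  isClosed_setOf_policyEval.mem_of_tendsto (hK.prodMk_nhds hP)
    (Eventually.of_forall fun i => (h i).1)

lemma tendsto_gain (h : IsPolicyIteration A B Q R P K) {Plim : Matrix (Fin n) (Fin n) ℝ}
    (hP : Tendsto P atTop (𝓝 Plim)) : Tendsto K atTop (𝓝 (ImprovedGain A B R Plim)) :=
  (tendsto_add_atTop_iff_nat 1).1 <|
    ((continuous_improvedGain.tendsto Plim).comp hP).congr fun i => (h i).2.symm

end IsPolicyIteration

theorem policy_iteration_converges_general {P : ℕ → Matrix (Fin n) (Fin n) ℝ}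
    {K : ℕ → Matrix (Fin m) (Fin n) ℝ} (hPK : IsPolicyIteration A B Q R P K) (hR : R.PosDef)
    (hSsymm : S.IsSymm) (hS : SolvesARE A B Q R S) (hK : IsStabilizing A B (K 0))
    (hstab : IsStabilizing A B (ImprovedGain A B R S)) :
    Tendsto P atTop (𝓝 S) ∧ Tendsto K atTop (𝓝 (ImprovedGain A B R S)) := by
  rw [isStabilizing_iff_isHurwitz_invClosedLoop] at hK hstab
  have hSP : ∀ i, S ≤ P i := hPK.le hR hSsymm hS hK
  obtain ⟨L, hPL⟩ :=
    exists_tendsto_of_antitone_of_le hSsymm (hPK.antitone hR hSsymm hS hK) hSP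
  have hSL : S ≤ L := ge_of_tendsto' hPL hSP
  have hLsymm : L.IsSymm := isSymm_of_le hSsymm hSL
  have hL : SolvesARE A B Q R L :=
    (policyEval_improvedGain_iff hR hLsymm).1 (hPK.policyEval_of_tendsto hPL (hPK.tendsto_gain hPL))
  have hLS : L ≤ S :=
    hL.le_of_policyEval hLsymm hR hstab ((policyEval_improvedGain_iff hR hSsymm).2 hS)
  obtain rfl := hLS.antisymm hSL
  exact ⟨hPL, hPK.tendsto_gain hPL⟩

end PolicyIteration

/-- Convergence of policy iteration: starting from a stabilizing gain `K 1`,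
if each `P i` (for `i ≥ 1`) is a symmetric positive definite solution of the
policy-evaluation equation for `K i` and `K (i+1) = −R⁻¹ Bᵀ A⁻ᵀ (P i)`, then
`P i → P*` and `K i → K* = −R⁻¹ Bᵀ A⁻ᵀ P*` as `i → ∞` (entrywise). -/
theorem policy_iteration_converges {n m : ℕ} (hn : 0 < n) (hm : 0 < m)
    (A : Matrix (Fin n) (Fin n) ℝ) (B : Matrix (Fin n) (Fin m) ℝ)
    (Q : Matrix (Fin n) (Fin n) ℝ) (R : Matrix (Fin m) (Fin m) ℝ)
    (hA : IsUnit A) (hQ : Q.PosSemidef) (hR : R.PosDef)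
    (Pstar : Matrix (Fin n) (Fin n) ℝ)
    (hPstar : Pstar.PosDef) (hARE : SolvesARE A B Q R Pstar)
    (P : ℕ → Matrix (Fin n) (Fin n) ℝ) (K : ℕ → Matrix (Fin m) (Fin n) ℝ)
    (hK1 : IsStabilizing A B (K 1))
    (hPi : ∀ i, 1 ≤ i → (P i).PosDef ∧ PolicyEval A B Q R (K i) (P i))
    (hKrec : ∀ i, 1 ≤ i → K (i + 1) = ImprovedGain A B R (P i)) :
    Tendsto P atTop (𝓝 Pstar) ∧
    Tendsto K atTop (𝓝 (ImprovedGain A B R Pstar)) := by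
  have hsymm : Pstar.IsSymm := isHermitian_iff_isSymm.1 hPstar.isHermitian
  have hstab : IsStabilizing A B (ImprovedGain A B R Pstar) := by
    rw [isStabilizing_iff_isHurwitz_invClosedLoop] at hK1 ⊢
    exact hARE.isHurwitz_invClosedLoop hPstar hQ hR hK1
  have hPK : IsPolicyIteration A B Q R (fun i => P (i + 1)) fun i => K (i + 1) := fun i =>
    ⟨(hPi (i + 1) (Nat.le_add_left 1 i)).2, hKrec (i + 1) (Nat.le_add_left 1 i)⟩
  exact (policy_iteration_converges_general hPK hR hsymm hARE hK1 hstab).imp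
    (tendsto_add_atTop_iff_nat 1).1 (tendsto_add_atTop_iff_nat 1).1
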